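/- (Sufficient conditions for representability.) Assume Assumption (A), let t0 > 0, x0 < b(t0), and let μ be a finite nonnegative Borel measure on [2b(0),∞) with ∫ exp(−θ²/(2t*)) μ(dθ) < ∞ for some t* > t0. Suppose that either (i) there is a (P1)-admissible measure λ1 on (0,t0] with λ1({t0}) = 0 such that r_μ(t, b(t)) = 1 for λ1-almost every t ∈ (0,t0], or (ii) there is a (D2)-admissible measure λ2 on (0,t0] with λ2([t0−ε, t0]) > 0 for every ε ∈ (0,t0) such that r_μ(t, b(t)) = 1 for λ2-almost every t ∈ (0,t0]. Then r_μ(t, b(t)) = 1 for every t ∈ (0,t0], i.e. b is representable by μ on [0,t0]. -/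

import Mathlib

open MeasureTheory Set Filter
open scoped ENNReal NNReal Topology

noncomputable def rTheta (θ t x : ℝ) : ℝ := Real.exp (-θ ^ 2 / (2 * t) + θ * x / t)

noncomputable def rMu (μ : Measure ℝ) (t x : ℝ) : ℝ≥0∞ :=
  ∫⁻ θ, ENNReal.ofReal (rTheta θ t x) ∂μ

/-- `(P_1)`-admissibility. -/
def P1Adm (b : ℝ → ℝ) (t0 x0 : ℝ) (lam : Measure ℝ) : Prop :=
  IsFiniteMeasure lam ∧ lam (Set.Ioc 0 t0)ᶜ = 0 ∧
    ∀ θ ∈ Set.Ici (2 * b 0),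
      ENNReal.ofReal (rTheta θ t0 x0) ≤ ∫⁻ t, ENNReal.ofReal (rTheta θ t (b t)) ∂lam

/-- `(D_2)`-admissibility. -/
def D2Adm (b : ℝ → ℝ) (t0 x0 : ℝ) (lam : Measure ℝ) : Prop :=
  IsFiniteMeasure lam ∧ lam (Set.Ioc 0 t0)ᶜ = 0 ∧
    ∀ θ ∈ Set.Ici (2 * b 0),
      (∫⁻ t, ENNReal.ofReal (rTheta θ t (b t)) ∂lam) ≤ ENNReal.ofReal (rTheta θ t0 x0)

/-!
Fix a holomorphic extension of `b` near `t > 0`. The Gaussian factor `exp (-θ² / (2 t))`, compared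
with the integrable `exp (-θ² / (2 t*))`, dominates `r_θ(z, b z)` for complex `z` near `t < t*`, so
`t ↦ r_μ(t, b t)` is real-analytic on `(0, t*)`. By the identity theorem it is constantly `1` as
soon as it takes that value at points accumulating at `t0`. Admissibility provides these points
through the asymptotics of `r_θ` as `θ → ∞`. Since `r_θ(s, y) = o(r_θ(t0, x0))` whenever `s < t0`, a
(P1)-admissible measure charges every left neighbourhood of `t0`; since
`r_θ(t0, x0) = o(r_θ(t0, b t0))`, a (D2)-admissible one has no atom at `t0`.
-/

theorem aestronglyMeasurable_deriv_of_ae_differentiableAt {α 𝕜 E : Type*} [MeasurableSpace α]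
    [NontriviallyNormedField 𝕜] [NormedAddCommGroup E] [NormedSpace 𝕜 E] {μ : Measure α}
    {F : 𝕜 → α → E} {z : 𝕜} (hF_meas : ∀ᶠ w in 𝓝 z, AEStronglyMeasurable (F w) μ)
    (hF_diff : ∀ᵐ a ∂μ, DifferentiableAt 𝕜 (F · a) z) :
    AEStronglyMeasurable (fun a ↦ deriv (F · a) z) μ := by
  classical
  refine aestronglyMeasurable_of_tendsto_ae (𝓝[≠] z)
    (f := fun w a ↦ if AEStronglyMeasurable (F w) μ then slope (F · a) z w else 0) (fun w ↦ ?_) ?_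
  · split_ifs with hw
    · exact (hw.sub hF_meas.self_of_nhds).const_smul _
    · exact aestronglyMeasurable_const
  · filter_upwards [hF_diff] with a ha
    refine (hasDerivAt_iff_tendsto_slope.mp ha.hasDerivAt).congr' ?_
    filter_upwards [mem_nhdsWithin_of_mem_nhds hF_meas] with w hw
    rw [if_pos hw]

theorem differentiableOn_integral_of_dominated {α E : Type*} [MeasurableSpace α]
    [NormedAddCommGroup E] [NormedSpace ℂ E] [CompleteSpace E] {μ : Measure α} {F : ℂ → α → E}
    {U : Set ℂ} {bound : α → ℝ} (hU : IsOpen U)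
    (hF_meas : ∀ z ∈ U, AEStronglyMeasurable (F z) μ)
    (hF_diff : ∀ᵐ a ∂μ, DifferentiableOn ℂ (F · a) U)
    (hF_bound : ∀ᵐ a ∂μ, ∀ z ∈ U, ‖F z a‖ ≤ bound a) (bound_integrable : Integrable bound μ) :
    DifferentiableOn ℂ (fun z ↦ ∫ a, F z a ∂μ) U := by
  intro z₀ hz₀
  obtain ⟨ε, hε, hεU⟩ := Metric.isOpen_iff.mp hU z₀ hz₀
  have closedBall_subset : ∀ z ∈ Metric.ball z₀ (ε / 2), Metric.closedBall z (ε / 2) ⊆ U := by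
    intro z hz
    refine (Metric.closedBall_subset_ball' ?_).trans hεU
    linarith [Metric.mem_ball.mp hz]
  have cauchy_estimate : ∀ᵐ a ∂μ, ∀ z ∈ Metric.ball z₀ (ε / 2),
      ‖deriv (F · a) z‖ ≤ bound a / (ε / 2) := by
    filter_upwards [hF_diff, hF_bound] with a hdiff hbound z hz
    exact Complex.norm_deriv_le_of_forall_mem_sphere_norm_le (half_pos hε)
      (hdiff.diffContOnCl_ball (closedBall_subset z hz))
      fun w hw ↦ hbound w (closedBall_subset z hz (Metric.sphere_subset_closedBall hw))
  have differentiableAt_kernel : ∀ᵐ a ∂μ, ∀ z ∈ U, DifferentiableAt ℂ (F · a) z :=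
    hF_diff.mono fun a ha z hz ↦ ha.differentiableAt (hU.mem_nhds hz)
  have integrable_kernel : Integrable (F z₀) μ :=
    bound_integrable.mono' (hF_meas z₀ hz₀) (hF_bound.mono fun a ha ↦ ha z₀ hz₀)
  have eventually_measurable := eventually_of_mem (hU.mem_nhds hz₀) hF_meas
  have ball_subset : Metric.ball z₀ (ε / 2) ⊆ U :=
    (Metric.ball_subset_ball (half_le_self hε.le)).trans hεU
  exact (hasDerivAt_integral_of_dominated_loc_of_deriv_le (Metric.ball_mem_nhds z₀ (half_pos hε))
    eventually_measurable integrable_kernel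
    (aestronglyMeasurable_deriv_of_ae_differentiableAt eventually_measurable
      (differentiableAt_kernel.mono fun a ha ↦ ha z₀ hz₀))
    cauchy_estimate (bound_integrable.div_const _)
    (differentiableAt_kernel.mono fun a ha z hz ↦ (ha z (ball_subset hz)).hasDerivAt)
    ).2.differentiableAt.differentiableWithinAt

theorem exists_analyticAt_algebraMap_eq {𝕜 𝕜' F : Type*} [NontriviallyNormedField 𝕜]
    [NontriviallyNormedField 𝕜'] [NormedAlgebra 𝕜 𝕜'] [NormedAddCommGroup F] [NormedSpace 𝕜 F]
    [NormedSpace 𝕜' F] [IsScalarTower 𝕜 𝕜' F] [CompleteSpace F] {f : 𝕜 → F} {x : 𝕜}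
    (hf : AnalyticAt 𝕜 f x) :
    ∃ g : 𝕜' → F, AnalyticAt 𝕜' g (algebraMap 𝕜 𝕜' x) ∧
      ∀ᶠ y in 𝓝 x, g (algebraMap 𝕜 𝕜' y) = f y := by
  obtain ⟨p, r, hp⟩ := hf
  let q : FormalMultilinearSeries 𝕜' 𝕜' F :=
    fun n ↦ ContinuousMultilinearMap.mkPiRing 𝕜' (Fin n) (p.coeff n)
  have radius_le : p.radius ≤ q.radius := by
    refine ENNReal.le_of_forall_nnreal_lt fun s hs ↦ ?_
    obtain ⟨C, -, hC⟩ := p.norm_mul_pow_le_of_lt_radius hs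
    refine q.le_radius_of_bound C fun n ↦ ?_
    rw [ContinuousMultilinearMap.norm_mkPiRing, ← p.norm_apply_eq_norm_coef]
    exact hC n
  have hq : AnalyticAt 𝕜' q.sum (algebraMap 𝕜 𝕜' x - algebraMap 𝕜 𝕜' x) := by
    rw [sub_self]
    exact (q.hasFPowerSeriesOnBall (hp.radius_pos.trans_le radius_le)).analyticAt
  refine ⟨fun z ↦ q.sum (z - algebraMap 𝕜 𝕜' x),
    hq.fun_comp (f := fun z ↦ z - algebraMap 𝕜 𝕜' x) (by fun_prop), ?_⟩
  filter_upwards [Metric.eball_mem_nhds x hp.r_pos] with y hy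
  rw [← (hp.hasSum_sub hy).tsum_eq, FormalMultilinearSeries.sum]
  congr 1 with n
  rw [ContinuousMultilinearMap.mkPiRing_apply, p.apply_eq_pow_smul_coeff, Fin.prod_const,
    ← map_sub, ← map_pow, algebraMap_smul]

theorem frequently_nhdsLT_of_ae {α : Type*} [MeasurableSpace α] [TopologicalSpace α]
    [LinearOrder α] [OrderTopology α] [DenselyOrdered α] {ν : Measure α} {l a : α} {p : α → Prop}
    (hla : l < a) (hatom : ν {a} = 0) (hpos : ∀ c ∈ Ioo l a, 0 < ν (Icc c a)) (hp : ∀ᵐ t ∂ν, p t) :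
    ∃ᶠ t in 𝓝[<] a, p t := by
  intro hnot
  obtain ⟨d, hd, hdp⟩ := (mem_nhdsLT_iff_exists_mem_Ico_Ioo_subset hla).mp hnot
  obtain ⟨c, hdc, hca⟩ := exists_between hd.2
  refine (hpos c ⟨hd.1.trans_lt hdc, hca⟩).ne' ?_
  refine measure_mono_null (fun t ht ↦ ?_) (measure_union_null hatom (ae_iff.mp hp))
  exact ht.2.eq_or_lt.imp id fun hta ↦ hdp ⟨hdc.trans_le ht.1, hta⟩

theorem neg_sq_mul_add_mul_le {a c p q M : ℝ} (hac : a < c) (hcp : c ≤ p) (hqM : |q| ≤ M) (θ : ℝ) :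
    -θ ^ 2 * p + θ * q ≤ M ^ 2 / (4 * (c - a)) - a * θ ^ 2 := by
  have hd : 0 < c - a := sub_pos.mpr hac
  have linear_le : θ * q ≤ |θ| * M :=
    (le_abs_self _).trans (by rw [abs_mul]; gcongr)
  have young : |θ| * M ≤ (c - a) * |θ| ^ 2 + M ^ 2 / (4 * (c - a)) := by
    have complete_square : (c - a) * |θ| ^ 2 + M ^ 2 / (4 * (c - a)) - |θ| * M
        = (2 * (c - a) * |θ| - M) ^ 2 / (4 * (c - a)) := by
      field_simp
      ring
    have : 0 ≤ (2 * (c - a) * |θ| - M) ^ 2 / (4 * (c - a)) := by positivity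
    linarith
  rw [sq_abs] at young
  nlinarith [mul_le_mul_of_nonneg_left hcp (sq_nonneg θ)]

theorem norm_cexp_neg_sq_mul_add_mul_le {a c M : ℝ} {p q : ℂ} (hac : a < c) (hcp : c ≤ p.re)
    (hqM : ‖q‖ ≤ M) (θ : ℝ) :
    ‖Complex.exp (-(θ : ℂ) ^ 2 * p + θ * q)‖
      ≤ Real.exp (M ^ 2 / (4 * (c - a))) * Real.exp (-a * θ ^ 2) := by
  have re_exponent : (-(θ : ℂ) ^ 2 * p + θ * q).re = -θ ^ 2 * p.re + θ * q.re := by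
    rw [Complex.add_re, Complex.re_ofReal_mul, ← Complex.ofReal_pow, ← Complex.ofReal_neg,
      Complex.re_ofReal_mul]
  rw [Complex.norm_exp, re_exponent, ← Real.exp_add, Real.exp_le_exp, neg_mul a, ← sub_eq_add_neg]
  exact neg_sq_mul_add_mul_le hac hcp ((Complex.abs_re_le_norm q).trans hqM) θ

theorem analyticAt_integral_cexp_neg_sq_mul_add_mul {μ : Measure ℝ} {a : ℝ} {P Q : ℂ → ℂ} {z₀ : ℂ}
    (hμ : Integrable (fun θ ↦ Real.exp (-a * θ ^ 2)) μ) (hP : AnalyticAt ℂ P z₀)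
    (hQ : AnalyticAt ℂ Q z₀) (ha : a < (P z₀).re) :
    AnalyticAt ℂ (fun z ↦ ∫ θ : ℝ, Complex.exp (-(θ : ℂ) ^ 2 * P z + θ * Q z) ∂μ) z₀ := by
  obtain ⟨c, hac, hcP⟩ := exists_between ha
  have eventually_good : ∀ᶠ z in 𝓝 z₀, c < (P z).re ∧ ‖Q z‖ < ‖Q z₀‖ + 1 ∧
      AnalyticAt ℂ P z ∧ AnalyticAt ℂ Q z :=
    ((Complex.continuous_re.continuousAt.comp hP.continuousAt).eventually (lt_mem_nhds hcP)).and <|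
      (hQ.continuousAt.norm.eventually (gt_mem_nhds (lt_add_one _))).and <|
        hP.eventually_analyticAt.and hQ.eventually_analyticAt
  obtain ⟨U, hU, hU_open, hz₀⟩ := eventually_nhds_iff.mp eventually_good
  refine (differentiableOn_integral_of_dominated hU_open (fun z _ ↦ ?_) (ae_of_all _ ?_)
    (ae_of_all _ fun θ z hz ↦ norm_cexp_neg_sq_mul_add_mul_le hac (hU z hz).1.le (hU z hz).2.1.le θ)
    (hμ.const_mul _)).analyticAt (hU_open.mem_nhds hz₀)
  · exact Continuous.aestronglyMeasurable (by fun_prop)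
  · intro θ z hz
    obtain ⟨-, -, hPz, hQz⟩ := hU z hz
    exact ((hPz.differentiableAt.const_mul _).add
      (hQz.differentiableAt.const_mul _)).cexp.differentiableWithinAt

section Kernel

variable {t s x y θ : ℝ}

theorem rTheta_pos (θ t x : ℝ) : 0 < rTheta θ t x := Real.exp_pos _

theorem ofReal_rTheta (θ t x : ℝ) :
    (rTheta θ t x : ℂ) = Complex.exp (-(θ : ℂ) ^ 2 * (1 / (2 * t)) + θ * (x / t)) := by
  rw [rTheta]
  push_cast
  ring_nf

theorem rTheta_le_rTheta (ht : 0 < t) (hts : t ≤ s) (hxy : x ≤ y) (hθ : 0 ≤ θ)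
    (hyθ : 2 * y ≤ θ) : rTheta θ t x ≤ rTheta θ s y := by
  have exponent_eq (u v : ℝ) : -θ ^ 2 / (2 * u) + θ * v / u = -(θ * (θ / 2 - v) / u) := by ring
  have hxθ : 0 ≤ θ / 2 - x := by linarith
  rw [rTheta, rTheta, exponent_eq, exponent_eq, Real.exp_le_exp, neg_le_neg_iff]
  gcongr

theorem isLittleO_rTheta_of_time_lt (hs : 0 < s) (hst : s < t) (x y : ℝ) :
    (rTheta · s x) =o[atTop] (rTheta · t y) := by
  have hδ : 0 < 1 / (2 * s) - 1 / (2 * t) := sub_pos.mpr (by gcongr)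
  have tendsto_linear :
      Tendsto (fun θ : ℝ ↦ (1 / (2 * s) - 1 / (2 * t)) * θ + (y / t - x / s)) atTop atTop :=
    tendsto_atTop_add_const_right _ _ (tendsto_id.const_mul_atTop hδ)
  refine Real.isLittleO_exp_comp_exp_comp.mpr
    ((tendsto_id.atTop_mul_atTop₀ tendsto_linear).congr fun θ ↦ ?_)
  simp only [id]
  ring

theorem isLittleO_rTheta_of_position_lt (ht : 0 < t) (hxy : x < y) :
    (rTheta · t x) =o[atTop] (rTheta · t y) := by
  have hd : 0 < (y - x) / t := div_pos (sub_pos.mpr hxy) ht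
  refine Real.isLittleO_exp_comp_exp_comp.mpr ((tendsto_id.const_mul_atTop hd).congr fun θ ↦ ?_)
  simp only [id]
  ring

end Kernel

section Mixture

variable {μ : Measure ℝ} {b : ℝ → ℝ} {t tstar : ℝ}

theorem rMu_eq_one_iff_integral_eq_one (μ : Measure ℝ) (t x : ℝ) :
    rMu μ t x = 1 ↔ ∫ θ, rTheta θ t x ∂μ = 1 := by
  have measurable_rTheta : AEStronglyMeasurable (fun θ ↦ rTheta θ t x) μ :=
    Continuous.aestronglyMeasurable (by unfold rTheta; fun_prop)
  rw [integral_eq_lintegral_of_nonneg_ae (ae_of_all _ fun θ ↦ (rTheta_pos θ t x).le)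
    measurable_rTheta, ENNReal.toReal_eq_one_iff, rMu]

theorem analyticAt_integral_rTheta (hμ : Integrable (fun θ ↦ Real.exp (-θ ^ 2 / (2 * tstar))) μ)
    (ht : t ∈ Ioo 0 tstar) (hb : AnalyticAt ℝ b t) :
    AnalyticAt ℝ (fun s ↦ ∫ θ, rTheta θ s (b s) ∂μ) t := by
  obtain ⟨B, hB, hBb⟩ := exists_analyticAt_algebraMap_eq (𝕜' := ℂ)
    ((Complex.ofRealCLM.analyticAt _).comp hb)
  have ht_ne : (t : ℂ) ≠ 0 := Complex.ofReal_ne_zero.mpr ht.1.ne'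
  have hμ' : Integrable (fun θ ↦ Real.exp (-(1 / (2 * tstar)) * θ ^ 2)) μ :=
    hμ.congr (ae_of_all _ fun θ ↦ by ring_nf)
  have rate_lt : 1 / (2 * tstar) < (1 / (2 * (t : ℂ))).re := by
    rw [show (1 / (2 * (t : ℂ))) = ((1 / (2 * t) : ℝ) : ℂ) by push_cast; rfl, Complex.ofReal_re]
    have := ht.1
    gcongr
    exact ht.2
  have analyticAt_extension := analyticAt_integral_cexp_neg_sq_mul_add_mul hμ'
    (analyticAt_const.div (analyticAt_const.mul analyticAt_id) (mul_ne_zero two_ne_zero ht_ne))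
    (hB.div analyticAt_id ht_ne) rate_lt
  refine analyticAt_extension.re_ofReal.congr ?_
  filter_upwards [hBb] with s hs
  simp only [Complex.coe_algebraMap, Function.comp_apply, Complex.ofRealCLM_apply] at hs
  simp only [Pi.div_apply, Pi.mul_apply, id, hs, ← ofReal_rTheta, integral_complex_ofReal,
    Complex.ofReal_re]

theorem rMu_eq_one_of_frequently (hμ : Integrable (fun θ ↦ Real.exp (-θ ^ 2 / (2 * tstar))) μ)
    (hb : AnalyticOnNhd ℝ b (Ioo 0 tstar)) (ht : t ∈ Ioo 0 tstar)
    (hfreq : ∃ᶠ s in 𝓝[≠] t, rMu μ s (b s) = 1) :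
    ∀ s ∈ Ioo 0 tstar, rMu μ s (b s) = 1 := by
  simp only [rMu_eq_one_iff_integral_eq_one] at hfreq ⊢
  have analyticOnNhd_mixture : AnalyticOnNhd ℝ (fun s ↦ ∫ θ, rTheta θ s (b s) ∂μ) (Ioo 0 tstar) :=
    fun s hs ↦ analyticAt_integral_rTheta hμ hs (hb s hs)
  exact analyticOnNhd_mixture.eqOn_of_preconnected_of_frequently_eq analyticOnNhd_const
    isPreconnected_Ioo ht hfreq

end Mixture

section Admissibility

variable {b : ℝ → ℝ} {t0 x0 c : ℝ} {lam : Measure ℝ}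

theorem P1Adm.measure_Icc_pos (h : P1Adm b t0 x0 lam) (hb : BddAbove (b '' Ioc 0 t0))
    (hc : c ∈ Ioo 0 t0) : 0 < lam (Icc c t0) := by
  obtain ⟨_, hsupp, hge⟩ := h
  obtain ⟨B, hB⟩ := hb
  by_contra! hnull
  have hae : ∀ᵐ t ∂lam, t ∈ Ioc 0 c ∧ b t ≤ B := by
    filter_upwards [hsupp, measure_eq_zero_iff_ae_notMem.mp (le_zero_iff.mp hnull)] with t ht htc
    have : ¬c ≤ t := fun hct ↦ htc ⟨hct, ht.2⟩
    exact ⟨⟨ht.1, (not_le.mp this).le⟩, hB (mem_image_of_mem b ht)⟩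
  refine (isLittleO_rTheta_of_time_lt hc.1 hc.2 B x0).not_isBigO
    (Frequently.of_forall fun θ ↦ (rTheta_pos θ c B).ne')
    (Asymptotics.IsBigO.of_bound (lam.real univ) ?_)
  filter_upwards [eventually_ge_atTop (2 * b 0), eventually_ge_atTop (2 * B),
    eventually_ge_atTop 0] with θ hθb hθB hθ
  rw [Real.norm_of_nonneg (rTheta_pos _ _ _).le, Real.norm_of_nonneg (rTheta_pos _ _ _).le,
    ← ENNReal.ofReal_le_ofReal_iff (mul_nonneg measureReal_nonneg (rTheta_pos _ _ _).le)]
  calc ENNReal.ofReal (rTheta θ t0 x0)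
      ≤ ∫⁻ t, ENNReal.ofReal (rTheta θ t (b t)) ∂lam := hge θ hθb
    _ ≤ ∫⁻ _, ENNReal.ofReal (rTheta θ c B) ∂lam :=
        lintegral_mono_ae <| hae.mono fun t ht ↦ ENNReal.ofReal_le_ofReal <|
          rTheta_le_rTheta ht.1.1 ht.1.2 ht.2 hθ hθB
    _ = ENNReal.ofReal (lam.real univ * rTheta θ c B) := by
        rw [lintegral_const, ENNReal.ofReal_mul measureReal_nonneg, ofReal_measureReal, mul_comm]

theorem D2Adm.measure_singleton_eq_zero (h : D2Adm b t0 x0 lam) (ht0 : 0 < t0) (hx0 : x0 < b t0) :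
    lam {t0} = 0 := by
  obtain ⟨_, -, hle⟩ := h
  by_contra hatom
  have hmass : 0 < lam.real {t0} := ENNReal.toReal_pos hatom (measure_ne_top _ _)
  refine (isLittleO_rTheta_of_position_lt ht0 hx0).not_isBigO
    (Frequently.of_forall fun θ ↦ (rTheta_pos θ t0 x0).ne')
    (Asymptotics.IsBigO.of_bound (lam.real {t0})⁻¹ ?_)
  filter_upwards [eventually_ge_atTop (2 * b 0)] with θ hθ
  rw [Real.norm_of_nonneg (rTheta_pos _ _ _).le, Real.norm_of_nonneg (rTheta_pos _ _ _).le,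
    ← div_eq_inv_mul, le_div_iff₀ hmass, ← ENNReal.ofReal_le_ofReal_iff (rTheta_pos _ _ _).le]
  calc ENNReal.ofReal (rTheta θ t0 (b t0) * lam.real {t0})
      = ∫⁻ t in {t0}, ENNReal.ofReal (rTheta θ t (b t)) ∂lam := by
        rw [lintegral_singleton, ENNReal.ofReal_mul (rTheta_pos _ _ _).le, ofReal_measureReal]
    _ ≤ ∫⁻ t, ENNReal.ofReal (rTheta θ t (b t)) ∂lam := setLIntegral_le_lintegral _ _
    _ ≤ ENNReal.ofReal (rTheta θ t0 x0) := hle θ hθ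

end Admissibility

theorem stmt_15_general (b : ℝ → ℝ) (t0 x0 : ℝ) (ht0 : 0 < t0) (hx0 : x0 < b t0)
    (tstar : ℝ) (htstar : t0 < tstar) (hba : AnalyticOnNhd ℝ b (Ioo 0 tstar))
    (hbdd : BddAbove (b '' Ioc 0 t0)) (μ : Measure ℝ)
    (hint : (∫⁻ θ, ENNReal.ofReal (Real.exp (-θ ^ 2 / (2 * tstar))) ∂μ) < ⊤)
    (hcase :
      (∃ lam1 : Measure ℝ, P1Adm b t0 x0 lam1 ∧ lam1 {t0} = 0 ∧
        ∀ᵐ t ∂lam1, rMu μ t (b t) = 1) ∨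
      (∃ lam2 : Measure ℝ, D2Adm b t0 x0 lam2 ∧
        (∀ ε ∈ Ioo 0 t0, 0 < lam2 (Icc (t0 - ε) t0)) ∧
        ∀ᵐ t ∂lam2, rMu μ t (b t) = 1)) :
    ∀ t ∈ Ioo 0 tstar, rMu μ t (b t) = 1 := by
  have hμ : Integrable (fun θ ↦ Real.exp (-θ ^ 2 / (2 * tstar))) μ :=
    (lintegral_ofReal_ne_top_iff_integrable (Continuous.aestronglyMeasurable (by fun_prop))
      (ae_of_all _ fun _ ↦ (Real.exp_pos _).le)).mp hint.ne
  have hfreq : ∃ᶠ t in 𝓝[<] t0, rMu μ t (b t) = 1 := by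
    rcases hcase with ⟨lam, hadm, hatom, hae⟩ | ⟨lam, hadm, hpos, hae⟩
    · exact frequently_nhdsLT_of_ae ht0 hatom (fun c hc ↦ hadm.measure_Icc_pos hbdd hc) hae
    · refine frequently_nhdsLT_of_ae ht0 (hadm.measure_singleton_eq_zero ht0 hx0)
        (fun c hc ↦ ?_) hae
      simpa only [sub_sub_cancel] using
        hpos (t0 - c) ⟨sub_pos.mpr hc.2, sub_lt_self t0 hc.1⟩
  exact rMu_eq_one_of_frequently hμ hba ⟨ht0, htstar⟩
    (hfreq.filter_mono (nhdsWithin_mono _ fun _ hs ↦ ne_of_lt hs))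

theorem stmt_15 (b : ℝ → ℝ)
    (hba : AnalyticOnNhd ℝ b (Set.Ici 0)) (hbconc : ConcaveOn ℝ (Set.Ici 0) b)
    (hb0 : 0 < b 0) (hbderiv : ∃ d : ℝ, HasDerivWithinAt b d (Set.Ici 0) 0)
    (t0 x0 : ℝ) (ht0 : 0 < t0) (hx0 : x0 < b t0)
    (μ : Measure ℝ) [IsFiniteMeasure μ] (hμsupp : μ (Set.Ici (2 * b 0))ᶜ = 0)
    (tstar : ℝ) (htstar : t0 < tstar)
    (hint : (∫⁻ θ, ENNReal.ofReal (Real.exp (-θ ^ 2 / (2 * tstar))) ∂μ) < ⊤)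
    (hcase :
      (∃ lam1 : Measure ℝ, P1Adm b t0 x0 lam1 ∧ lam1 {t0} = 0 ∧
        ∀ᵐ t ∂lam1, rMu μ t (b t) = 1) ∨
      (∃ lam2 : Measure ℝ, D2Adm b t0 x0 lam2 ∧
        (∀ ε ∈ Set.Ioo 0 t0, 0 < lam2 (Set.Icc (t0 - ε) t0)) ∧
        ∀ᵐ t ∂lam2, rMu μ t (b t) = 1)) :
    ∀ t ∈ Set.Ioc 0 t0, rMu μ t (b t) = 1 :=
  fun t ht ↦ stmt_15_general b t0 x0 ht0 hx0 tstar htstar (hba.mono fun _ hs ↦ hs.1.le)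
    ((isCompact_Icc.bddAbove_image (hba.continuousOn.mono Icc_subset_Ici_self)).mono
      (image_mono Ioc_subset_Icc_self)) μ hint hcase t ⟨ht.1, ht.2.trans_lt htstar⟩
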